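/- arXiv:2403.02187 — 3 statements merged into one kernel-verified Lean document; each statement's English description precedes it below -/
import Mathlib

section
/- Let (ξ, η) be an absolutely continuous pair of random vectors with joint density p_{ξ,η} and marginals p_ξ, p_η, and let q_{ξ,η} be another density on the same space with marginals q_ξ, q_η. Then |I(ξ; η) − I_q(ξ; η)| ≤ D_KL(p_{ξ,η} ‖ q_{ξ,η}), where I_q(ξ; η) = E_{(ξ,η)∼p_{ξ,η}}[log(q_{ξ,η}(ξ, η)/(q_ξ(ξ) q_η(η)))]. -/
/-!
Splitting the logarithms where `p > 0` gives `I − I_q = K − A − B`, where `K = D_KL(p ‖ q)` and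
`A`, `B` are the divergences of the two pairs of marginals. The claim is then equivalent to
`0 ≤ A + B ≤ 2 K`, which follows from `0 ≤ A ≤ K` and `0 ≤ B ≤ K` (`marginal_kl_bounds`).

Both `0 ≤ A` and `A ≤ K` come from `log r ≥ 1 - 1 / r`: the first with `r = pX / qX`, the second
with `r = (p / q) / (pX / qX)`. What is left is that the reweighted densities `p * (qX / pX)` and
`q * (pX / qX)` have total mass at most one (`integrable_reweight`), which is Tonelli's theorem.
-/

open MeasureTheory Real

/-- Replacing the first marginal `fX` of `f` by a density `gX` yields a function of total mass at
most one. Mass is lost where `fX = 0`, since the quotient is then `0`. -/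
lemma integrable_reweight {α β : Type*} [MeasurableSpace α] [MeasurableSpace β]
    {μ : Measure α} {ν : Measure β} [SigmaFinite μ] [SigmaFinite ν]
    {f : α × β → ℝ} {fX gX : α → ℝ}
    (hf : Measurable f) (hf0 : ∀ z, 0 ≤ f z) (hfi : Integrable f (μ.prod ν))
    (hfX : ∀ x, fX x = ∫ y, f (x, y) ∂ν) (hfXm : Measurable fX)
    (hgm : Measurable gX) (hg0 : ∀ x, 0 ≤ gX x) (hgi : Integrable gX μ)
    (hg1 : ∫ x, gX x ∂μ = 1) :
    Integrable (fun z : α × β => f z * (gX z.1 / fX z.1)) (μ.prod ν) ∧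
      ∫ z, f z * (gX z.1 / fX z.1) ∂(μ.prod ν) ≤ 1 := by
  have hfX0 : ∀ x, 0 ≤ fX x := fun x => by
    rw [hfX]; exact integral_nonneg fun y => hf0 _
  have hw0 : ∀ z : α × β, 0 ≤ f z * (gX z.1 / fX z.1) := fun z =>
    mul_nonneg (hf0 z) (div_nonneg (hg0 _) (hfX0 _))
  have hwm : Measurable (fun z : α × β => f z * (gX z.1 / fX z.1)) := by fun_prop
  have hle : ∫⁻ z, ENNReal.ofReal (f z * (gX z.1 / fX z.1)) ∂(μ.prod ν) ≤ 1 := by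
    rw [lintegral_prod _ hwm.ennreal_ofReal.aemeasurable]
    calc ∫⁻ x, ∫⁻ y, ENNReal.ofReal (f (x, y) * (gX x / fX x)) ∂ν ∂μ
        ≤ ∫⁻ x, ENNReal.ofReal (gX x) ∂μ := by
          apply lintegral_mono_ae
          filter_upwards [hfi.prod_right_ae] with x hx
          rw [← ofReal_integral_eq_lintegral_ofReal (hx.mul_const _)
            (Filter.Eventually.of_forall fun y => hw0 (x, y)), integral_mul_const, ← hfX]
          apply ENNReal.ofReal_le_ofReal
          rcases (hfX0 x).eq_or_lt with h | h
          · rw [← h]; simpa using hg0 x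
          · rw [mul_div_cancel₀ _ h.ne']
      _ = 1 := by
          rw [← ofReal_integral_eq_lintegral_ofReal hgi (Filter.Eventually.of_forall hg0), hg1,
            ENNReal.ofReal_one]
  refine ⟨⟨hwm.aestronglyMeasurable, ?_⟩, ?_⟩
  · rw [hasFiniteIntegral_iff_ofReal (Filter.Eventually.of_forall hw0)]
    exact hle.trans_lt ENNReal.one_lt_top
  · rw [integral_eq_lintegral_of_nonneg_ae (Filter.Eventually.of_forall hw0)
      hwm.aestronglyMeasurable]
    exact ENNReal.toReal_le_of_le_ofReal zero_le_one (by simpa using hle)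

/-- Nonnegativity of the divergence between first marginals, and its monotonicity under passing
to the joint densities. -/
lemma marginal_kl_bounds {α β : Type*} [MeasurableSpace α] [MeasurableSpace β]
    {μ : Measure α} {ν : Measure β} [SigmaFinite μ] [SigmaFinite ν]
    {p q : α × β → ℝ} {pX qX : α → ℝ}
    (hp : Measurable p) (hp0 : ∀ z, 0 ≤ p z) (hp1 : ∫ z, p z ∂(μ.prod ν) = 1)
    (hpX : ∀ x, pX x = ∫ y, p (x, y) ∂ν)
    (hq : Measurable q) (hq0 : ∀ z, 0 < q z) (hq1 : ∫ z, q z ∂(μ.prod ν) = 1)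
    (hqX : ∀ x, qX x = ∫ y, q (x, y) ∂ν) (hqX0 : ∀ x, 0 < qX x)
    (hsupp : ∀ᵐ z ∂(μ.prod ν), 0 < p z → 0 < pX z.1)
    (hK : Integrable (fun z => p z * Real.log (p z / q z)) (μ.prod ν))
    (hA : Integrable (fun z => p z * Real.log (pX z.1 / qX z.1)) (μ.prod ν)) :
    0 ≤ ∫ z, p z * Real.log (pX z.1 / qX z.1) ∂(μ.prod ν) ∧
      ∫ z, p z * Real.log (pX z.1 / qX z.1) ∂(μ.prod ν)
        ≤ ∫ z, p z * Real.log (p z / q z) ∂(μ.prod ν) := by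
  -- A nonzero Bochner integral forces integrability.
  have hpi : Integrable p (μ.prod ν) := by
    by_contra h; simp [integral_undef h] at hp1
  have hqi : Integrable q (μ.prod ν) := by
    by_contra h; simp [integral_undef h] at hq1
  have epX : pX = fun x => ∫ y, p (x, y) ∂ν := funext hpX
  have eqX : qX = fun x => ∫ y, q (x, y) ∂ν := funext hqX
  have hpXm : Measurable pX := by
    rw [epX]; exact hp.stronglyMeasurable.integral_prod_right'.measurable
  have hqXm : Measurable qX := by
    rw [eqX]; exact hq.stronglyMeasurable.integral_prod_right'.measurable
  have hpXi : Integrable pX μ := by rw [epX]; exact hpi.integral_prod_left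
  have hqXi : Integrable qX μ := by rw [eqX]; exact hqi.integral_prod_left
  have hpX1 : ∫ x, pX x ∂μ = 1 := by rw [epX, ← hp1, integral_prod _ hpi]
  have hqX1 : ∫ x, qX x ∂μ = 1 := by rw [eqX, ← hq1, integral_prod _ hqi]
  have hpX0 : ∀ x, 0 ≤ pX x := fun x => by
    rw [hpX]; exact integral_nonneg fun y => hp0 _
  obtain ⟨i1, b1⟩ := integrable_reweight hp hp0 hpi hpX hpXm hqXm (fun x => (hqX0 x).le) hqXi hqX1
  obtain ⟨i2, b2⟩ := integrable_reweight hq (fun z => (hq0 z).le) hqi hqX hqXm hpXm hpX0 hpXi hpX1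
  constructor
  · have h : ∫ z, (p z - p z * (qX z.1 / pX z.1)) ∂(μ.prod ν)
        ≤ ∫ z, p z * Real.log (pX z.1 / qX z.1) ∂(μ.prod ν) := by
      apply integral_mono_ae (hpi.sub i1) hA
      filter_upwards [hsupp] with z hz
      simp only [Pi.sub_apply]
      rcases (hp0 z).eq_or_lt with h | h
      · simp [← h]
      · have := one_sub_inv_le_log_of_pos (div_pos (hz h) (hqX0 z.1))
        rw [inv_div] at this
        nlinarith [mul_le_mul_of_nonneg_left this h.le]
    rw [integral_sub hpi i1] at h
    linarith
  · have h : ∫ z, (p z - q z * (pX z.1 / qX z.1)) ∂(μ.prod ν)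
        ≤ ∫ z, (p z * Real.log (p z / q z) - p z * Real.log (pX z.1 / qX z.1)) ∂(μ.prod ν) := by
      apply integral_mono_ae (hpi.sub i2) (hK.sub hA)
      filter_upwards [hsupp] with z hz
      simp only [Pi.sub_apply]
      have hr0 : 0 ≤ pX z.1 / qX z.1 := div_nonneg (hpX0 _) (hqX0 _).le
      rcases (hp0 z).eq_or_lt with h | h
      · simp only [← h]
        nlinarith [mul_nonneg (hq0 z).le hr0]
      · have hr := div_pos (hz h) (hqX0 z.1)
        have hs := div_pos h (hq0 z)
        have := one_sub_inv_le_log_of_pos (div_pos hs hr)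
        rw [inv_div, Real.log_div hs.ne' hr.ne'] at this
        have h2 := mul_le_mul_of_nonneg_left this h.le
        have h3 : p z * (pX z.1 / qX z.1 / (p z / q z)) = q z * (pX z.1 / qX z.1) := by
          have := (hq0 z).ne'
          have := h.ne'
          have := (hqX0 z.1).ne'
          field_simp
        rw [mul_sub, h3] at h2
        linarith
    rw [integral_sub hpi i2, integral_sub hK hA] at h
    linarith

/-- Let `(ξ, η)` be an absolutely continuous pair of random vectors with
joint density `p` and marginals `pX`, `pY`, and let `q` be another density on the same
space with marginals `qX`, `qY`.  Then

`|I(ξ; η) − I_q(ξ; η)| ≤ D_KL(p ‖ q)`,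

where `I(ξ; η) = E_p[log (p(ξ,η) / (pX ξ * pY η))]`,
`I_q(ξ; η) = E_p[log (q(ξ,η) / (qX ξ * qY η))]` and
`D_KL(p ‖ q) = E_p[log (p/q)]`. -/
theorem mutual_information_proposal_bound
    (n m : ℕ)
    -- joint density p of (ξ, η) and its marginals
    (p : (Fin n → ℝ) × (Fin m → ℝ) → ℝ)
    (hp_meas : Measurable p)
    (hp_nonneg : ∀ z, 0 ≤ p z)
    (hp_int : ∫ z, p z = 1)
    (pX : (Fin n → ℝ) → ℝ) (hpX : ∀ x, pX x = ∫ y, p (x, y))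
    (pY : (Fin m → ℝ) → ℝ) (hpY : ∀ y, pY y = ∫ x, p (x, y))
    -- proposal density q and its marginals (assumed everywhere positive,
    -- so that all the Kullback–Leibler divergences are finite)
    (q : (Fin n → ℝ) × (Fin m → ℝ) → ℝ)
    (hq_meas : Measurable q)
    (hq_pos : ∀ z, 0 < q z)
    (hq_int : ∫ z, q z = 1)
    (qX : (Fin n → ℝ) → ℝ) (hqX : ∀ x, qX x = ∫ y, q (x, y))
    (qY : (Fin m → ℝ) → ℝ) (hqY : ∀ y, qY y = ∫ x, q (x, y))
    (hqX_pos : ∀ x, 0 < qX x) (hqY_pos : ∀ y, 0 < qY y)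
    -- on the support of p the marginal densities of p are positive (holds a.e.)
    (hp_supp : ∀ᵐ z : (Fin n → ℝ) × (Fin m → ℝ) ∂volume,
      0 < p z → 0 < pX z.1 ∧ 0 < pY z.2)
    -- integrability of all the integrands involved
    (h_int_I : Integrable fun z : (Fin n → ℝ) × (Fin m → ℝ) =>
      p z * Real.log (p z / (pX z.1 * pY z.2)))
    (h_int_Iq : Integrable fun z : (Fin n → ℝ) × (Fin m → ℝ) =>
      p z * Real.log (q z / (qX z.1 * qY z.2)))
    (h_int_KL : Integrable fun z : (Fin n → ℝ) × (Fin m → ℝ) =>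
      p z * Real.log (p z / q z))
    (h_int_KLm : Integrable fun z : (Fin n → ℝ) × (Fin m → ℝ) =>
      pX z.1 * pY z.2 * Real.log ((pX z.1 * pY z.2) / (qX z.1 * qY z.2)))
    (h_int_mX : Integrable fun z : (Fin n → ℝ) × (Fin m → ℝ) =>
      p z * Real.log (pX z.1 / qX z.1))
    (h_int_mY : Integrable fun z : (Fin n → ℝ) × (Fin m → ℝ) =>
      p z * Real.log (pY z.2 / qY z.2)) :
    -- |I(ξ; η) − I_q(ξ; η)| ≤ D_KL(p_{ξ,η} ‖ q_{ξ,η})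
    |(∫ z : (Fin n → ℝ) × (Fin m → ℝ), p z * Real.log (p z / (pX z.1 * pY z.2)))
        - ∫ z : (Fin n → ℝ) × (Fin m → ℝ), p z * Real.log (q z / (qX z.1 * qY z.2))|
      ≤ ∫ z : (Fin n → ℝ) × (Fin m → ℝ), p z * Real.log (p z / q z) := by
  obtain ⟨hA0, hAK⟩ := marginal_kl_bounds (μ := volume) (ν := volume) hp_meas hp_nonneg hp_int hpX
    hq_meas hq_pos hq_int hqX hqX_pos (hp_supp.mono fun z hz h => (hz h).1) h_int_KL h_int_mX
  -- The second marginals are the first marginals of the densities composed with `Prod.swap`.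
  have hsw : MeasurePreserving
      (Prod.swap : (Fin m → ℝ) × (Fin n → ℝ) → (Fin n → ℝ) × (Fin m → ℝ)) volume volume :=
    Measure.measurePreserving_swap
  have hsi : ∀ F : (Fin n → ℝ) × (Fin m → ℝ) → ℝ,
      ∫ z, F (Prod.swap z) ∂((volume : Measure (Fin m → ℝ)).prod (volume : Measure (Fin n → ℝ)))
        = ∫ z, F z :=
    fun F => integral_prod_swap F
  obtain ⟨hB0, hBK⟩ := marginal_kl_bounds (μ := volume) (ν := volume)
    (p := fun z => p z.swap) (q := fun z => q z.swap) (pX := pY) (qX := qY)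
    (hp_meas.comp measurable_swap) (fun z => hp_nonneg _) ((hsi p).trans hp_int) hpY
    (hq_meas.comp measurable_swap) (fun z => hq_pos _) ((hsi q).trans hq_int) hqY hqY_pos
    ((hsw.quasiMeasurePreserving.ae hp_supp).mono fun z hz h => (hz h).2)
    h_int_KL.swap h_int_mY.swap
  have eB := hsi fun z => p z * Real.log (pY z.2 / qY z.2)
  have eK := hsi fun z => p z * Real.log (p z / q z)
  simp only [Prod.snd_swap] at eB
  rw [eB] at hB0 hBK
  rw [eK] at hBK
  have key : (∫ z : (Fin n → ℝ) × (Fin m → ℝ), p z * Real.log (p z / (pX z.1 * pY z.2)))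
        - ∫ z : (Fin n → ℝ) × (Fin m → ℝ), p z * Real.log (q z / (qX z.1 * qY z.2))
      = (∫ z : (Fin n → ℝ) × (Fin m → ℝ), p z * Real.log (p z / q z))
        - (∫ z : (Fin n → ℝ) × (Fin m → ℝ), p z * Real.log (pX z.1 / qX z.1))
        - ∫ z : (Fin n → ℝ) × (Fin m → ℝ), p z * Real.log (pY z.2 / qY z.2) := by
    rw [← integral_sub h_int_I h_int_Iq, ← integral_sub h_int_KL h_int_mX,
      ← integral_sub (by exact h_int_KL.sub h_int_mX) h_int_mY]
    apply integral_congr_ae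
    filter_upwards [hp_supp] with z hz
    rcases (hp_nonneg z).eq_or_lt with h | h
    · simp [← h]
    · obtain ⟨h1, h2⟩ := hz h
      have h3 := hqX_pos z.1
      have h4 := hqY_pos z.2
      have h5 := hq_pos z
      rw [Real.log_div h.ne' (mul_pos h1 h2).ne', Real.log_div h5.ne' (mul_pos h3 h4).ne',
        Real.log_div h.ne' h5.ne', Real.log_div h1.ne' h3.ne', Real.log_div h2.ne' h4.ne',
        Real.log_mul h1.ne' h2.ne', Real.log_mul h3.ne' h4.ne']
      ring
  rw [key, abs_le]
  change _ ≤ ∫ z : (Fin n → ℝ) × (Fin m → ℝ), p z * Real.log (p z / q z) at hAK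
  change 0 ≤ ∫ z : (Fin n → ℝ) × (Fin m → ℝ), p z * Real.log (pX z.1 / qX z.1) at hA0
  change (∫ z : (Fin n → ℝ) × (Fin m → ℝ), p z * Real.log (pX z.1 / qX z.1)) ≤ _ at hAK
  constructor <;> linarith
end

section
/- Let (ξ, η) be an absolutely continuous pair of random vectors with joint density p_{ξ,η}, marginal densities p_ξ and p_η, mean m = (m_ξ, m_η), and non-singular covariance matrix Σ with blocks Σ_{ξξ}, Σ_{ξη}, Σ_{ηξ}, Σ_{ηη}. Then I(ξ; η) = (1/2)[log det Σ_{ξξ} + log det Σ_{ηη} − log det Σ] + D_KL(p_{ξ,η} ‖ N(m, Σ)) − D_KL(p_ξ ⊗ p_η ‖ N(m, diag(Σ_{ξξ}, Σ_{ηη}))), where diag(Σ_{ξξ}, Σ_{ηη}) is the block-diagonal matrix with blocks Σ_{ξξ} and Σ_{ηη}. -/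
/-!
For a density `r` on `ℝⁿ` with mean `m` and invertible covariance `T`, the function
`-log N(m, T)` is a constant plus half the quadratic form of `T⁻¹`, whose `r`-expectation is
`tr (T⁻¹ T) = n`. Hence (`integral_mul_log_div_gaussianPdf`)
`D_KL(r ‖ N(m, T)) = ∫ r log r + (n log (2π) + log det T) / 2 + n / 2`.

This applies to `p` with covariance `S`, and to `pX ⊗ pY`, whose mean is again `m` and whose
covariance is `diag(Sxx, Syy)`. In the difference of the two divergences the terms in `n` cancel
and the determinants cancel against the explicit term of the claim, so what remains is
`∫ p log p - ∫ (pX ⊗ pY) log (pX ⊗ pY)`. The second integral splits as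
`∫ pX log pX + ∫ pY log pY`, where each summand is integrable because a slice of the product
integrand is (`integrable_mul_log_of_prod`). By Fubini these are `∫ p log pX` and `∫ p log pY`
(`integrable_marginal_iff`, `integral_marginal`), which gives the mutual information.
-/

open MeasureTheory Matrix Real

/-- The probability density function of the multivariate Gaussian distribution `N(m, S)`
on `ι → ℝ` with mean `m` and (positive-definite) covariance matrix `S`. -/
noncomputable def gaussianPdf {ι : Type*} [Fintype ι] [DecidableEq ι]
    (m : ι → ℝ) (S : Matrix ι ι ℝ) (x : ι → ℝ) : ℝ :=
  (Real.sqrt ((2 * Real.pi) ^ (Fintype.card ι) * S.det))⁻¹ *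
    Real.exp (-(1 / 2 : ℝ) * ((x - m) ⬝ᵥ S⁻¹.mulVec (x - m)))

/-! ### Integrals against a joint density and its marginals -/

lemma integrable_marginal_iff {α β : Type*} [MeasurableSpace α] [MeasurableSpace β]
    {μ : Measure α} {ν : Measure β} [SFinite μ] [SFinite ν] {P : α × β → ℝ}
    (hP : Integrable P (μ.prod ν)) (hP0 : ∀ w, 0 ≤ P w) {f : α → ℝ} (hf : Measurable f) :
    Integrable (fun w : α × β => P w * f w.1) (μ.prod ν) ↔
      Integrable (fun x => (∫ y, P (x, y) ∂ν) * f x) μ := by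
  constructor
  · intro h
    simpa only [integral_mul_const] using h.integral_prod_left
  · intro h
    have hm : AEStronglyMeasurable (fun w : α × β => P w * f w.1) (μ.prod ν) :=
      hP.aestronglyMeasurable.mul (hf.comp measurable_fst).aestronglyMeasurable
    rw [integrable_prod_iff hm]
    refine ⟨?_, ?_⟩
    · filter_upwards [hP.prod_right_ae] with x hx using hx.mul_const _
    · refine h.norm.congr (Filter.Eventually.of_forall fun x => ?_)
      simp only [norm_mul, integral_mul_const]
      rw [Real.norm_of_nonneg (integral_nonneg fun y => hP0 (x, y))]
      congr 1
      exact integral_congr_ae (Filter.Eventually.of_forall fun y =>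
        (Real.norm_of_nonneg (hP0 (x, y))).symm)

lemma integral_marginal {α β : Type*} [MeasurableSpace α] [MeasurableSpace β]
    {μ : Measure α} {ν : Measure β} [SFinite μ] [SFinite ν] {P : α × β → ℝ} {f : α → ℝ}
    (h : Integrable (fun w : α × β => P w * f w.1) (μ.prod ν)) :
    ∫ w, P w * f w.1 ∂(μ.prod ν) = ∫ x, (∫ y, P (x, y) ∂ν) * f x ∂μ := by
  rw [integral_prod _ h]
  simp only [integral_mul_const]

/-- Since `∫ r ≠ 0`, some `y` has `r y ≠ 0` and an integrable slice; on that slice the integrand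
is a linear combination of `q log q` and `q`, with nonzero coefficient at `q log q`. -/
lemma integrable_mul_log_of_prod {α β : Type*} [MeasurableSpace α] [MeasurableSpace β]
    {μ : Measure α} {ν : Measure β} [SFinite μ] [SFinite ν] {q : α → ℝ} {r : β → ℝ}
    (hq : Integrable q μ) (hr : ∫ y, r y ∂ν ≠ 0)
    (h : Integrable (fun w : α × β => q w.1 * r w.2 * log (q w.1 * r w.2)) (μ.prod ν)) :
    Integrable (fun x => q x * log (q x)) μ := by
  have hex : ∃ y, r y ≠ 0 ∧ Integrable (fun x => q x * r y * log (q x * r y)) μ := by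
    by_contra! hcon
    refine hr (integral_eq_zero_of_ae ?_)
    filter_upwards [h.prod_left_ae] with y hy
    by_contra h0
    exact hcon y h0 hy
  obtain ⟨y, hy0, hy⟩ := hex
  refine ((hy.const_mul (r y)⁻¹).sub (hq.mul_const (log (r y)))).congr
    (Filter.Eventually.of_forall fun x => ?_)
  rcases eq_or_ne (q x) 0 with h0 | h0
  · simp [h0]
  · simp only [Pi.sub_apply]
    rw [log_mul h0 hy0]
    field_simp
    ring

/-! ### Divergence from the Gaussian with the same mean and covariance -/

lemma log_gaussianPdf {ι : Type*} [Fintype ι] [DecidableEq ι] (m : ι → ℝ) (T : Matrix ι ι ℝ)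
    (hT : 0 < T.det) (z : ι → ℝ) :
    log (gaussianPdf m T z) = -(1 / 2) * (Fintype.card ι * log (2 * π) + log T.det)
      - 1 / 2 * ((z - m) ⬝ᵥ T⁻¹.mulVec (z - m)) := by
  have h2 : (0 : ℝ) < (2 * π) ^ Fintype.card ι := by positivity
  have h3 : 0 < √((2 * π) ^ Fintype.card ι * T.det) := Real.sqrt_pos.2 (mul_pos h2 hT)
  rw [gaussianPdf, log_mul (inv_ne_zero h3.ne') (exp_ne_zero _), log_inv, log_exp,
    log_sqrt (mul_pos h2 hT).le, log_mul h2.ne' hT.ne', log_pow]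
  ring

lemma gaussianPdf_pos {ι : Type*} [Fintype ι] [DecidableEq ι] (m : ι → ℝ) (T : Matrix ι ι ℝ)
    (hT : 0 < T.det) (z : ι → ℝ) : 0 < gaussianPdf m T z := by
  have h2 : (0 : ℝ) < (2 * π) ^ Fintype.card ι := by positivity
  have h3 : 0 < √((2 * π) ^ Fintype.card ι * T.det) := Real.sqrt_pos.2 (mul_pos h2 hT)
  exact mul_pos (inv_pos.2 h3) (exp_pos _)

/-- The Mahalanobis form of a density with covariance `T` has expectation
`tr (T⁻¹ T) = card ι`. -/
lemma integral_mul_mahalanobis {ι : Type*} [Fintype ι] [DecidableEq ι] {m : ι → ℝ}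
    {T : Matrix ι ι ℝ} (hT : 0 < T.det) {r : (ι → ℝ) → ℝ}
    (h2 : ∀ k l, Integrable fun z => r z * ((z k - m k) * (z l - m l)))
    (hcov : ∀ k l, ∫ z, r z * ((z k - m k) * (z l - m l)) = T k l) :
    Integrable (fun z => r z * ((z - m) ⬝ᵥ T⁻¹.mulVec (z - m))) ∧
      ∫ z, r z * ((z - m) ⬝ᵥ T⁻¹.mulVec (z - m)) = Fintype.card ι := by
  have hexp : (fun z => r z * ((z - m) ⬝ᵥ T⁻¹.mulVec (z - m))) = fun z =>
      ∑ k, ∑ l, T⁻¹ k l * (r z * ((z l - m l) * (z k - m k))) := by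
    funext z
    simp only [dotProduct, mulVec, Finset.mul_sum, Pi.sub_apply]
    exact Finset.sum_congr rfl fun k _ => Finset.sum_congr rfl fun l _ => by ring
  have hint : ∀ k l, Integrable fun z => T⁻¹ k l * (r z * ((z l - m l) * (z k - m k))) :=
    fun k l => (h2 l k).const_mul _
  rw [hexp]
  refine ⟨integrable_finsetSum _ fun k _ => integrable_finsetSum _ fun l _ => hint k l, ?_⟩
  rw [integral_finsetSum _ fun k _ => integrable_finsetSum _ fun l _ => hint k l]
  have htr : (T⁻¹ * T).trace = Fintype.card ι := by
    rw [nonsing_inv_mul _ (isUnit_iff_ne_zero.2 hT.ne'), trace_one]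
  rw [← htr, trace]
  refine Finset.sum_congr rfl fun k _ => ?_
  rw [integral_finsetSum _ fun l _ => hint k l, diag_apply, mul_apply]
  exact Finset.sum_congr rfl fun l _ => by rw [integral_const_mul, hcov]

/-- Divergence of a density with mean `m` and covariance `T` from `N(m, T)`. -/
lemma integral_mul_log_div_gaussianPdf {ι : Type*} [Fintype ι] [DecidableEq ι] {m : ι → ℝ}
    {T : Matrix ι ι ℝ} (hT : 0 < T.det) {r : (ι → ℝ) → ℝ}
    (hr : Integrable r) (hr1 : ∫ z, r z = 1)
    (h2 : ∀ k l, Integrable fun z => r z * ((z k - m k) * (z l - m l)))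
    (hcov : ∀ k l, ∫ z, r z * ((z k - m k) * (z l - m l)) = T k l)
    (hKL : Integrable fun z => r z * log (r z / gaussianPdf m T z)) :
    Integrable (fun z => r z * log (r z)) ∧
      ∫ z, r z * log (r z / gaussianPdf m T z) = (∫ z, r z * log (r z))
        + 1 / 2 * (Fintype.card ι * log (2 * π) + log T.det) + 1 / 2 * Fintype.card ι := by
  obtain ⟨hQ, hQi⟩ := integral_mul_mahalanobis hT h2 hcov
  set c : ℝ := 1 / 2 * (Fintype.card ι * log (2 * π) + log T.det) with hc
  have hA : Integrable fun z => r z * c := hr.mul_const c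
  have hB : Integrable fun z => 1 / 2 * (r z * ((z - m) ⬝ᵥ T⁻¹.mulVec (z - m))) :=
    hQ.const_mul _
  have hpt : ∀ z, r z * log (r z) = r z * log (r z / gaussianPdf m T z)
      - (r z * c + 1 / 2 * (r z * ((z - m) ⬝ᵥ T⁻¹.mulVec (z - m)))) := by
    intro z
    rcases eq_or_ne (r z) 0 with h0 | h0
    · simp [h0]
    · rw [log_div h0 (gaussianPdf_pos m T hT z).ne', log_gaussianPdf m T hT, hc]
      ring
  refine ⟨(hKL.sub (hA.add hB)).congr (Filter.Eventually.of_forall fun z => (hpt z).symm), ?_⟩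
  have key : ∫ z, r z * log (r z) = (∫ z, r z * log (r z / gaussianPdf m T z))
      - (c + 1 / 2 * Fintype.card ι) := by
    simp_rw [hpt]
    have hAB : Integrable fun z =>
        r z * c + 1 / 2 * (r z * ((z - m) ⬝ᵥ T⁻¹.mulVec (z - m))) := hA.add hB
    rw [integral_sub hKL hAB, integral_add hA hB, integral_mul_const,
      integral_const_mul, hr1, hQi, one_mul]
  rw [key]
  ring

/-! ### Splitting `ℝ^(dx+dy)` as a product -/

lemma measurePreserving_sumElim (dx dy : ℕ) :
    MeasurePreserving (MeasurableEquiv.sumPiEquivProdPi fun _ : Fin dx ⊕ Fin dy => ℝ).symm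
      ((volume : Measure (Fin dx → ℝ)).prod (volume : Measure (Fin dy → ℝ))) volume :=
  volume_measurePreserving_sumPiEquivProdPi_symm _

lemma sumPiEquivProdPi_symm_eq (dx dy : ℕ) (w : (Fin dx → ℝ) × (Fin dy → ℝ)) :
    (MeasurableEquiv.sumPiEquivProdPi fun _ : Fin dx ⊕ Fin dy => ℝ).symm w
      = Sum.elim w.1 w.2 := by
  funext k
  cases k <;> rfl

lemma integral_sumElim {dx dy : ℕ} (F : (Fin dx ⊕ Fin dy → ℝ) → ℝ) :
    ∫ z, F z = ∫ w : (Fin dx → ℝ) × (Fin dy → ℝ), F (Sum.elim w.1 w.2)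
      ∂((volume : Measure (Fin dx → ℝ)).prod (volume : Measure (Fin dy → ℝ))) := by
  rw [← (measurePreserving_sumElim dx dy).integral_comp' F]
  simp only [sumPiEquivProdPi_symm_eq]

lemma integrable_sumElim {dx dy : ℕ} (F : (Fin dx ⊕ Fin dy → ℝ) → ℝ) :
    Integrable F ↔ Integrable (fun w : (Fin dx → ℝ) × (Fin dy → ℝ) => F (Sum.elim w.1 w.2))
      ((volume : Measure (Fin dx → ℝ)).prod (volume : Measure (Fin dy → ℝ))) := by
  rw [← (measurePreserving_sumElim dx dy).integrable_comp_emb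
    (MeasurableEquiv.measurableEmbedding _)]
  simp only [Function.comp_def, sumPiEquivProdPi_symm_eq]

lemma marginal_inl {dx dy : ℕ} {p : (Fin dx ⊕ Fin dy → ℝ) → ℝ} (hp : Integrable p)
    (hp0 : ∀ z, 0 ≤ p z) {pX : (Fin dx → ℝ) → ℝ}
    (hpX : ∀ x, pX x = ∫ y : Fin dy → ℝ, p (Sum.elim x y))
    {f : (Fin dx → ℝ) → ℝ} (hf : Measurable f) :
    (Integrable (fun z => p z * f fun i => z (Sum.inl i)) ↔ Integrable fun x => pX x * f x) ∧
      (Integrable (fun x => pX x * f x) →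
        ∫ z, p z * f (fun i => z (Sum.inl i)) = ∫ x, pX x * f x) := by
  have hiff := integrable_marginal_iff ((integrable_sumElim p).1 hp) (fun w => hp0 _) hf
  simp only [integral_sumElim (fun z => p z * f fun i => z (Sum.inl i)),
    integrable_sumElim (fun z => p z * f fun i => z (Sum.inl i)), Sum.elim_inl, hpX]
  exact ⟨hiff, fun h => integral_marginal (hiff.2 h)⟩

lemma marginal_inr {dx dy : ℕ} {p : (Fin dx ⊕ Fin dy → ℝ) → ℝ} (hp : Integrable p)
    (hp0 : ∀ z, 0 ≤ p z) {pY : (Fin dy → ℝ) → ℝ}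
    (hpY : ∀ y, pY y = ∫ x : Fin dx → ℝ, p (Sum.elim x y))
    {f : (Fin dy → ℝ) → ℝ} (hf : Measurable f) :
    (Integrable (fun z => p z * f fun j => z (Sum.inr j)) ↔ Integrable fun y => pY y * f y) ∧
      (Integrable (fun y => pY y * f y) →
        ∫ z, p z * f (fun j => z (Sum.inr j)) = ∫ y, pY y * f y) := by
  have hiff := integrable_marginal_iff ((integrable_sumElim p).1 hp).swap (fun w => hp0 _) hf
  simp only [integral_sumElim (fun z => p z * f fun j => z (Sum.inr j)),
    integrable_sumElim (fun z => p z * f fun j => z (Sum.inr j)), Sum.elim_inr, hpY]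
  rw [← integrable_swap_iff, ← integral_prod_swap]
  exact ⟨hiff, fun h => integral_marginal (hiff.2 h)⟩

/-! ### The decomposition -/

/-- Let `(ξ, η)` be an absolutely continuous pair of random vectors with
joint density `p`, marginal densities `pX` and `pY`, mean `m = (mξ, mη)`, and non-singular
covariance matrix `S` with blocks `Sxx, Sxy, Syx, Syy`.  Then

`I(ξ; η) = (1/2)[log det Sxx + log det Syy − log det S]`
`  + D_KL(p ‖ N(m, S)) − D_KL(pX ⊗ pY ‖ N(m, diag(Sxx, Syy)))`,

where `diag(Sxx, Syy)` is the block-diagonal matrix with blocks `Sxx` and `Syy`.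
The joint vector `(ξ, η)` is modelled as a random vector indexed by `Fin dx ⊕ Fin dy`,
with `ξ` the `Sum.inl` coordinates and `η` the `Sum.inr` coordinates. -/
theorem mutual_information_gaussian_decomposition
    (dx dy : ℕ)
    -- joint density of (ξ, η) on ℝ^{dx+dy} and its marginals
    (p : ((Fin dx ⊕ Fin dy) → ℝ) → ℝ)
    (hp_meas : Measurable p)
    (hp_nonneg : ∀ z, 0 ≤ p z)
    (hp_int : ∫ z, p z = 1)
    (pX : (Fin dx → ℝ) → ℝ) (hpX : ∀ x, pX x = ∫ y : Fin dy → ℝ, p (Sum.elim x y))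
    (pY : (Fin dy → ℝ) → ℝ) (hpY : ∀ y, pY y = ∫ x : Fin dx → ℝ, p (Sum.elim x y))
    -- on the support of p the marginal densities of p are positive (holds a.e.)
    (hp_supp : ∀ᵐ z : (Fin dx ⊕ Fin dy) → ℝ ∂volume,
      0 < p z → 0 < pX (fun i => z (Sum.inl i)) ∧ 0 < pY (fun j => z (Sum.inr j)))
    -- mean and covariance matrix of (ξ, η), with block structure
    (m : (Fin dx ⊕ Fin dy) → ℝ)
    (S : Matrix (Fin dx ⊕ Fin dy) (Fin dx ⊕ Fin dy) ℝ)
    (h_moment₁ : ∀ k, Integrable fun z : (Fin dx ⊕ Fin dy) → ℝ => p z * z k)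
    (hm : ∀ k, (∫ z : (Fin dx ⊕ Fin dy) → ℝ, p z * z k) = m k)
    (h_moment₂ : ∀ k l, Integrable fun z : (Fin dx ⊕ Fin dy) → ℝ =>
      p z * ((z k - m k) * (z l - m l)))
    (hScov : ∀ k l, (∫ z : (Fin dx ⊕ Fin dy) → ℝ, p z * ((z k - m k) * (z l - m l))) = S k l)
    (hS_posdef : S.PosDef)
    (Sxx : Matrix (Fin dx) (Fin dx) ℝ) (Sxy : Matrix (Fin dx) (Fin dy) ℝ)
    (Syx : Matrix (Fin dy) (Fin dx) ℝ) (Syy : Matrix (Fin dy) (Fin dy) ℝ)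
    (hblocks : S = Matrix.fromBlocks Sxx Sxy Syx Syy)
    -- integrability of all the integrands involved
    (h_int_I : Integrable fun z : (Fin dx ⊕ Fin dy) → ℝ =>
      p z * Real.log (p z / (pX (fun i => z (Sum.inl i)) * pY (fun j => z (Sum.inr j)))))
    (h_int_KL : Integrable fun z : (Fin dx ⊕ Fin dy) → ℝ =>
      p z * Real.log (p z / gaussianPdf m S z))
    (h_int_KLm : Integrable fun z : (Fin dx ⊕ Fin dy) → ℝ =>
      pX (fun i => z (Sum.inl i)) * pY (fun j => z (Sum.inr j)) *
        Real.log ((pX (fun i => z (Sum.inl i)) * pY (fun j => z (Sum.inr j)))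
          / gaussianPdf m (Matrix.fromBlocks Sxx 0 0 Syy) z))
    (h_int_pp : Integrable fun z : (Fin dx ⊕ Fin dy) → ℝ => p z * Real.log (p z)) :
    -- I(ξ; η) = (1/2)[log det Sxx + log det Syy − log det S]
    --           + D_KL(p ‖ N(m, S)) − D_KL(pX ⊗ pY ‖ N(m, diag(Sxx, Syy)))
    (∫ z : (Fin dx ⊕ Fin dy) → ℝ,
        p z * Real.log (p z / (pX (fun i => z (Sum.inl i)) * pY (fun j => z (Sum.inr j)))))
      = (1 / 2 : ℝ) * (Real.log Sxx.det + Real.log Syy.det - Real.log S.det)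
        + (∫ z : (Fin dx ⊕ Fin dy) → ℝ, p z * Real.log (p z / gaussianPdf m S z))
        - ∫ z : (Fin dx ⊕ Fin dy) → ℝ,
            pX (fun i => z (Sum.inl i)) * pY (fun j => z (Sum.inr j)) *
              Real.log ((pX (fun i => z (Sum.inl i)) * pY (fun j => z (Sum.inr j)))
                / gaussianPdf m (Matrix.fromBlocks Sxx 0 0 Syy) z) := by
  have hp : Integrable p := by
    by_contra h
    rw [integral_undef h] at hp_int
    exact zero_ne_one hp_int
  have hpe : Measurable fun w : (Fin dx → ℝ) × (Fin dy → ℝ) => p (Sum.elim w.1 w.2) := by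
    have h := hp_meas.comp (measurePreserving_sumElim dx dy).measurable
    simpa only [Function.comp_def, sumPiEquivProdPi_symm_eq] using h
  have hXm : Measurable pX := by
    rw [funext hpX]
    exact hpe.stronglyMeasurable.integral_prod_right'.measurable
  have hYm : Measurable pY := by
    rw [funext hpY]
    exact hpe.stronglyMeasurable.integral_prod_left'.measurable
  have MX := fun {f : (Fin dx → ℝ) → ℝ} (hf : Measurable f) =>
    marginal_inl hp hp_nonneg hpX hf
  have MY := fun {f : (Fin dy → ℝ) → ℝ} (hf : Measurable f) =>
    marginal_inr hp hp_nonneg hpY hf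
  have hXi : Integrable pX := by
    simpa using (MX (measurable_const (a := (1 : ℝ)))).1.1 (by simpa using hp)
  have hYi : Integrable pY := by
    simpa using (MY (measurable_const (a := (1 : ℝ)))).1.1 (by simpa using hp)
  have hX1 : ∫ x, pX x = 1 := by
    rw [← hp_int]
    simpa using ((MX (measurable_const (a := (1 : ℝ)))).2 (by simpa using hXi)).symm
  have hY1 : ∫ y, pY y = 1 := by
    rw [← hp_int]
    simpa using ((MY (measurable_const (a := (1 : ℝ)))).2 (by simpa using hYi)).symm
  -- The centred moments of the marginals are those of `p`, by Fubini.
  have hc1 : ∀ k, Integrable fun z : (Fin dx ⊕ Fin dy) → ℝ => p z * (z k - m k) := fun k => by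
    simpa only [mul_sub, Pi.sub_def] using (h_moment₁ k).sub (hp.mul_const (m k))
  have hc1' : ∀ k, ∫ z : (Fin dx ⊕ Fin dy) → ℝ, p z * (z k - m k) = 0 := fun k => by
    simp only [mul_sub]
    rw [integral_sub (h_moment₁ k) (hp.mul_const (m k)), integral_mul_const, hm, hp_int]
    ring
  have fX : ∀ i : Fin dx, Measurable fun x : Fin dx → ℝ => x i - m (Sum.inl i) :=
    fun i => (measurable_pi_apply i).sub_const _
  have fY : ∀ j : Fin dy, Measurable fun y : Fin dy → ℝ => y j - m (Sum.inr j) :=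
    fun j => (measurable_pi_apply j).sub_const _
  have X1 : ∀ i, Integrable fun x => pX x * (x i - m (Sum.inl i)) :=
    fun i => (MX (fX i)).1.1 (hc1 (Sum.inl i))
  have X1' : ∀ i, ∫ x, pX x * (x i - m (Sum.inl i)) = 0 :=
    fun i => ((MX (fX i)).2 (X1 i)).symm.trans (hc1' (Sum.inl i))
  have Y1 : ∀ j, Integrable fun y => pY y * (y j - m (Sum.inr j)) :=
    fun j => (MY (fY j)).1.1 (hc1 (Sum.inr j))
  have X2 : ∀ i i', Integrable fun x =>
      pX x * ((x i - m (Sum.inl i)) * (x i' - m (Sum.inl i'))) :=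
    fun i i' => (MX ((fX i).mul (fX i'))).1.1 (h_moment₂ (Sum.inl i) (Sum.inl i'))
  have X2' : ∀ i i', ∫ x, pX x * ((x i - m (Sum.inl i)) * (x i' - m (Sum.inl i'))) = Sxx i i' :=
    fun i i' => ((MX ((fX i).mul (fX i'))).2 (X2 i i')).symm.trans
      ((hScov (Sum.inl i) (Sum.inl i')).trans (by rw [hblocks, fromBlocks_apply₁₁]))
  have Y2 : ∀ j j', Integrable fun y =>
      pY y * ((y j - m (Sum.inr j)) * (y j' - m (Sum.inr j'))) :=
    fun j j' => (MY ((fY j).mul (fY j'))).1.1 (h_moment₂ (Sum.inr j) (Sum.inr j'))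
  have Y2' : ∀ j j', ∫ y, pY y * ((y j - m (Sum.inr j)) * (y j' - m (Sum.inr j'))) = Syy j j' :=
    fun j j' => ((MY ((fY j).mul (fY j'))).2 (Y2 j j')).symm.trans
      ((hScov (Sum.inr j) (Sum.inr j')).trans (by rw [hblocks, fromBlocks_apply₂₂]))
  have hdx : 0 < Sxx.det := by
    have h := (hS_posdef.submatrix (e := Sum.inl) Sum.inl_injective).det_pos
    rwa [hblocks, show (fromBlocks Sxx Sxy Syx Syy).submatrix Sum.inl Sum.inl = Sxx from rfl] at h
  have hdy : 0 < Syy.det := by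
    have h := (hS_posdef.submatrix (e := Sum.inr) Sum.inr_injective).det_pos
    rwa [hblocks, show (fromBlocks Sxx Sxy Syx Syy).submatrix Sum.inr Sum.inr = Syy from rfl] at h
  have hd0 : (fromBlocks Sxx 0 0 Syy).det = Sxx.det * Syy.det := det_fromBlocks_zero₂₁ _ _ _
  -- `r` is the product density `pX ⊗ pY`; its cross-covariances vanish because the centred first
  -- moments do.
  set r : ((Fin dx ⊕ Fin dy) → ℝ) → ℝ :=
    fun z => pX (fun i => z (Sum.inl i)) * pY (fun j => z (Sum.inr j)) with hr
  have prodMoment : ∀ (F : ((Fin dx ⊕ Fin dy) → ℝ) → ℝ) (f : (Fin dx → ℝ) → ℝ)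
      (g : (Fin dy → ℝ) → ℝ), (∀ x y, F (Sum.elim x y) = f x * g y) → Integrable f →
      Integrable g → Integrable F ∧ ∫ z, F z = (∫ x, f x) * ∫ y, g y := by
    intro F f g hF hf hg
    rw [integrable_sumElim, integral_sumElim]
    simp only [hF]
    exact ⟨hf.mul_prod hg, integral_prod_mul f g⟩
  obtain ⟨hri, hr1⟩ := prodMoment r pX pY (fun x y => rfl) hXi hYi
  rw [hX1, hY1, one_mul] at hr1
  have hcov0 : ∀ k l, Integrable (fun z => r z * ((z k - m k) * (z l - m l))) ∧
      ∫ z, r z * ((z k - m k) * (z l - m l)) = fromBlocks Sxx 0 0 Syy k l := by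
    rintro (i | j) (i' | j')
    · obtain ⟨h, h'⟩ := prodMoment
        (fun z => r z * ((z (Sum.inl i) - m (Sum.inl i)) * (z (Sum.inl i') - m (Sum.inl i')))) _ pY
        (fun x y => by simp only [hr, Sum.elim_inl, Sum.elim_inr]; ring) (X2 i i') hYi
      exact ⟨h, by rw [h', X2', hY1, mul_one, fromBlocks_apply₁₁]⟩
    · obtain ⟨h, h'⟩ := prodMoment
        (fun z => r z * ((z (Sum.inl i) - m (Sum.inl i)) * (z (Sum.inr j') - m (Sum.inr j')))) _ _
        (fun x y => by simp only [hr, Sum.elim_inl, Sum.elim_inr]; ring) (X1 i) (Y1 j')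
      exact ⟨h, by rw [h', X1', zero_mul, fromBlocks_apply₁₂, Matrix.zero_apply]⟩
    · obtain ⟨h, h'⟩ := prodMoment
        (fun z => r z * ((z (Sum.inr j) - m (Sum.inr j)) * (z (Sum.inl i') - m (Sum.inl i')))) _ _
        (fun x y => by simp only [hr, Sum.elim_inl, Sum.elim_inr]; ring) (X1 i') (Y1 j)
      exact ⟨h, by rw [h', X1', zero_mul, fromBlocks_apply₂₁, Matrix.zero_apply]⟩
    · obtain ⟨h, h'⟩ := prodMoment
        (fun z => r z * ((z (Sum.inr j) - m (Sum.inr j)) * (z (Sum.inr j') - m (Sum.inr j')))) pX _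
        (fun x y => by simp only [hr, Sum.elim_inl, Sum.elim_inr]; ring) hXi (Y2 j j')
      exact ⟨h, by rw [h', Y2', hX1, one_mul, fromBlocks_apply₂₂]⟩
  obtain ⟨-, hKL⟩ := integral_mul_log_div_gaussianPdf hS_posdef.det_pos hp hp_int
    h_moment₂ hScov h_int_KL
  obtain ⟨hrlog, hKL0⟩ := integral_mul_log_div_gaussianPdf (hd0 ▸ mul_pos hdx hdy) hri hr1
    (fun k l => (hcov0 k l).1) (fun k l => (hcov0 k l).2) h_int_KLm
  -- Only the joint integrand is assumed integrable, so the marginal ones are recovered from slices.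
  have hrlog' := (integrable_sumElim _).1 hrlog
  simp only [hr, Sum.elim_inl, Sum.elim_inr] at hrlog'
  have hXlog : Integrable fun x => pX x * log (pX x) :=
    integrable_mul_log_of_prod hXi (by rw [hY1]; exact one_ne_zero) hrlog'
  have hYlog : Integrable fun y => pY y * log (pY y) := by
    refine integrable_mul_log_of_prod (ν := (volume : Measure (Fin dx → ℝ))) (r := pX) hYi
      (by rw [hX1]; exact one_ne_zero) (hrlog'.swap.congr (Filter.Eventually.of_forall fun w => ?_))
    simp only [Function.comp_apply, Prod.fst_swap, Prod.snd_swap, mul_comm (pX _)]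
  have hrent : ∫ z, r z * log (r z)
      = (∫ x, pX x * log (pX x)) + ∫ y, pY y * log (pY y) := by
    obtain ⟨hA, hA'⟩ := prodMoment (fun z => pX (fun i => z (Sum.inl i)) *
      log (pX fun i => z (Sum.inl i)) * pY (fun j => z (Sum.inr j))) _ pY
      (fun x y => rfl) hXlog hYi
    obtain ⟨hB, hB'⟩ := prodMoment (fun z => pX (fun i => z (Sum.inl i)) *
      (pY (fun j => z (Sum.inr j)) * log (pY fun j => z (Sum.inr j)))) pX _
      (fun x y => rfl) hXi hYlog
    rw [hY1, mul_one] at hA'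
    rw [hX1, one_mul] at hB'
    rw [← hA', ← hB', ← integral_add hA hB]
    refine integral_congr_ae (Filter.Eventually.of_forall fun z => ?_)
    simp only [hr]
    rcases eq_or_ne (pX fun i => z (Sum.inl i)) 0 with h0 | h0
    · simp [h0]
    rcases eq_or_ne (pY fun j => z (Sum.inr j)) 0 with h1 | h1
    · simp [h1]
    rw [log_mul h0 h1]
    ring
  have hpX_log := (MX hXm.log).1.2 hXlog
  have hpY_log := (MY hYm.log).1.2 hYlog
  have hI : ∫ z, p z * log (p z / r z) = (∫ z, p z * log (p z))
      - ((∫ x, pX x * log (pX x)) + ∫ y, pY y * log (pY y)) := by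
    have hsum : Integrable fun z => p z * log (pX fun i => z (Sum.inl i))
        + p z * log (pY fun j => z (Sum.inr j)) := hpX_log.add hpY_log
    rw [← (MX hXm.log).2 hXlog, ← (MY hYm.log).2 hYlog, ← integral_add hpX_log hpY_log,
      ← integral_sub h_int_pp hsum]
    refine integral_congr_ae ?_
    filter_upwards [hp_supp] with z hz
    rcases (hp_nonneg z).eq_or_lt with h0 | h0
    · simp [← h0]
    · obtain ⟨h1, h2⟩ := hz h0
      simp only [hr]
      rw [log_div h0.ne' (mul_pos h1 h2).ne', log_mul h1.ne' h2.ne']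
      ring
  rw [hd0, log_mul hdx.ne' hdy.ne'] at hKL0
  calc _ = _ := hI
    _ = (1 / 2 : ℝ) * (log Sxx.det + log Syy.det - log S.det)
        + (∫ z, p z * log (p z / gaussianPdf m S z))
        - ∫ z, r z * log (r z / gaussianPdf m (fromBlocks Sxx 0 0 Syy) z) := by
      rw [hKL, hKL0, hrent]
      ring
end

section
/- Let ε > 0, let X ∼ U[0, 1] and Z ∼ U[−ε, ε] be independent uniform random variables, and let Y = X + Z. Then the mutual information is I(X; Y) = ε − log(2ε) if ε < 1/2, and I(X; Y) = 1/(4ε) if ε ≥ 1/2. -/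
/-!
The overlap length `w y = |[0, 1] ∩ [y - ε, y + ε]|` gives the density `pY = w / (2ε)`, so on the
support of the joint density the integrand equals `-(2ε)⁻¹ log (w y)`, and integrating out `x` leaves
`I(X; Y) = -(2ε)⁻¹ ∫ w log w` (`integral_kernel`). The function `w` is a trapezoid: with
`m = min 1 (2ε)` it rises with slope one from `0` to `m`, stays at `m` on an interval of length
`1 + 2ε - 2m`, and falls back with slope minus one. Hence
`∫ w log w = 2 ∫₀ᵐ t log t dt + (1 + 2ε - 2m) m log m` (`integral_overlap`), where
`∫₀ᵐ t log t dt = m² log m / 2 - m² / 4`. The two cases of the theorem are `m = 2ε` and `m = 1`.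
Fubini applies because `w log w` is continuous with compact support.
-/

open MeasureTheory Real

/-- The length of `[0, 1] ∩ [y - ε, y + ε]`. -/
noncomputable def overlap (ε y : ℝ) : ℝ := max 0 (min 1 (y + ε) - max 0 (y - ε))

lemma continuous_overlap (ε : ℝ) : Continuous (overlap ε) := by
  unfold overlap; fun_prop

lemma overlap_nonneg (ε y : ℝ) : 0 ≤ overlap ε y := le_max_left _ _

lemma overlap_eq_zero {ε y : ℝ} (h : y ∉ Set.Ioc (-ε) (1 + ε)) : overlap ε y = 0 := by
  unfold overlap
  rw [max_eq_left]
  rw [Set.mem_Ioc, not_and_or, not_lt, not_le] at h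
  rcases h with h | h
  · linarith [min_le_right 1 (y + ε), le_max_left 0 (y - ε)]
  · linarith [min_le_left 1 (y + ε), le_max_right 0 (y - ε)]

/-- The support of the joint density of `(X, Y)`. -/
def jointSupport (ε : ℝ) : Set (ℝ × ℝ) :=
  {z | z.1 ∈ Set.Icc (0 : ℝ) 1 ∧ z.2 - z.1 ∈ Set.Icc (-ε) ε}

lemma measurableSet_jointSupport (ε : ℝ) : MeasurableSet (jointSupport ε) := by
  have h1 : MeasurableSet {z : ℝ × ℝ | z.1 ∈ Set.Icc (0 : ℝ) 1} :=
    measurable_fst measurableSet_Icc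
  have h2 : MeasurableSet {z : ℝ × ℝ | z.2 - z.1 ∈ Set.Icc (-ε) ε} :=
    (measurable_snd.sub measurable_fst) measurableSet_Icc
  exact h1.inter h2

lemma jointSupport_section (ε y c : ℝ) :
    (fun x => (jointSupport ε).indicator (fun _ => c) (x, y)) =
      (Set.Icc (max 0 (y - ε)) (min 1 (y + ε))).indicator (fun _ => c) := by
  funext x
  have : (x, y) ∈ jointSupport ε ↔ x ∈ Set.Icc (max 0 (y - ε)) (min 1 (y + ε)) := by
    simp only [jointSupport, Set.mem_ofPred_eq, Set.mem_Icc, max_le_iff, le_min_iff]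
    constructor
    · rintro ⟨⟨_, _⟩, _, _⟩
      refine ⟨⟨?_, ?_⟩, ?_, ?_⟩ <;> linarith
    · rintro ⟨⟨_, _⟩, _, _⟩
      refine ⟨⟨?_, ?_⟩, ?_, ?_⟩ <;> linarith
  by_cases h : (x, y) ∈ jointSupport ε
  · rw [Set.indicator_of_mem h, Set.indicator_of_mem (this.1 h)]
  · rw [Set.indicator_of_notMem h, Set.indicator_of_notMem (fun hx => h (this.2 hx))]

lemma integral_section (ε y c : ℝ) :
    ∫ x, (jointSupport ε).indicator (fun _ => c) (x, y) = overlap ε y * c := by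
  rw [jointSupport_section, integral_indicator_const _ measurableSet_Icc, Measure.real,
    Real.volume_Icc, ENNReal.toReal_ofReal', smul_eq_mul, overlap, max_comm]

lemma integrable_overlap_comp (ε : ℝ) {φ : ℝ → ℝ} (hφ : Continuous φ) (h0 : φ 0 = 0) :
    Integrable (fun y => φ (overlap ε y)) := by
  refine (hφ.comp (continuous_overlap ε)).integrable_of_hasCompactSupport ?_
  refine HasCompactSupport.intro (isCompact_Icc (a := -ε) (b := 1 + ε)) fun y hy => ?_
  have : y ∉ Set.Ioc (-ε) (1 + ε) := fun h => hy (Set.Ioc_subset_Icc_self h)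
  simp [overlap_eq_zero this, h0]

/-- Integrating out `x` reduces the mutual information to a one-dimensional integral. -/
lemma integral_kernel (ε : ℝ) :
    ∫ z : ℝ × ℝ, (jointSupport ε).indicator (fun _ => Real.log (overlap ε z.2)) z =
      ∫ y, overlap ε y * Real.log (overlap ε y) := by
  have hint : Integrable
      (fun z : ℝ × ℝ => (jointSupport ε).indicator (fun _ => Real.log (overlap ε z.2)) z)
      (volume.prod volume) := by
    have hmeas : Measurable
        (fun z : ℝ × ℝ => (jointSupport ε).indicator (fun _ => Real.log (overlap ε z.2)) z) := by
      have : Measurable (fun z : ℝ × ℝ => Real.log (overlap ε z.2)) :=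
        Real.measurable_log.comp ((continuous_overlap ε).measurable.comp measurable_snd)
      exact this.indicator (measurableSet_jointSupport ε)
    rw [integrable_prod_iff' hmeas.aestronglyMeasurable]
    constructor
    · refine Filter.Eventually.of_forall fun y => ?_
      show Integrable (fun x => (jointSupport ε).indicator
        (fun _ => Real.log (overlap ε y)) (x, y))
      rw [jointSupport_section]
      refine (integrable_indicator_iff measurableSet_Icc).2 ?_
      exact integrableOn_const (by simp [Real.volume_Icc])
    · have h := integrable_overlap_comp ε (φ := fun t => |t * Real.log t|)
        Real.continuous_mul_log.abs (by simp)
      refine h.congr (Filter.Eventually.of_forall fun y => ?_)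
      simp only [norm_indicator_eq_indicator_norm]
      rw [integral_section, abs_mul, abs_of_nonneg (overlap_nonneg ε y), Real.norm_eq_abs]
  rw [Measure.volume_eq_prod, integral_prod_symm _ hint]
  exact integral_congr_ae (Filter.Eventually.of_forall fun y =>
    integral_section ε y (Real.log (overlap ε y)))

lemma integral_mul_log {m : ℝ} (hm : 0 ≤ m) :
    ∫ t in (0 : ℝ)..m, t * Real.log t = m ^ 2 * Real.log m / 2 - m ^ 2 / 4 := by
  rw [intervalIntegral.integral_eq_sub_of_hasDerivAt_of_le
    (f := fun t => t * (t * Real.log t) / 2 - t ^ 2 / 4) hm]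
  · simp; ring
  · have := Real.continuous_mul_log
    exact Continuous.continuousOn (by fun_prop)
  · intro t ht
    have ht0 : t ≠ 0 := ne_of_gt ht.1
    have h := (((hasDerivAt_id t).mul ((hasDerivAt_id t).mul
      (Real.hasDerivAt_log ht0))).div_const 2).sub (((hasDerivAt_id t).pow 2).div_const 4)
    refine HasDerivAt.congr_deriv (f := fun t => t * (t * Real.log t) / 2 - t ^ 2 / 4) h ?_
    simp only [id, Pi.mul_apply]
    push_cast
    field_simp
    ring
  · exact Real.continuous_mul_log.intervalIntegrable _ _

lemma integral_overlap {ε m : ℝ} (hε : 0 < ε) (hm : m = min 1 (2 * ε)) :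
    ∫ y, overlap ε y * Real.log (overlap ε y) =
      2 * (m ^ 2 * Real.log m / 2 - m ^ 2 / 4) + (1 + 2 * ε - 2 * m) * (m * Real.log m) := by
  have hm1 : m ≤ 1 := hm ▸ min_le_left _ _
  have hm2 : m ≤ 2 * ε := hm ▸ min_le_right _ _
  have hm0 : 0 ≤ m := hm ▸ le_min zero_le_one (by linarith)
  have hmc : m = 1 ∨ m = 2 * ε := by
    rcases min_choice 1 (2 * ε) with h | h <;> simp [hm, h]
  have hcont : Continuous (fun y => overlap ε y * Real.log (overlap ε y)) :=
    Real.continuous_mul_log.comp (continuous_overlap ε)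
  have hii : ∀ a b, IntervalIntegrable (fun y => overlap ε y * Real.log (overlap ε y)) volume a b :=
    fun a b => hcont.intervalIntegrable a b
  have hsupp : ∫ y, overlap ε y * Real.log (overlap ε y) =
      ∫ y in (-ε)..(1 + ε), overlap ε y * Real.log (overlap ε y) := by
    rw [intervalIntegral.integral_of_le (by linarith), setIntegral_eq_integral_of_forall_compl_eq_zero]
    intro y hy
    simp [overlap_eq_zero hy]
  have hL : ∫ y in (-ε)..(-ε + m), overlap ε y * Real.log (overlap ε y) =
      ∫ t in (0 : ℝ)..m, t * Real.log t := by
    have h := intervalIntegral.integral_comp_add_right (a := -ε) (b := -ε + m)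
      (fun t => t * Real.log t) ε
    rw [show -ε + ε = 0 by ring, show -ε + m + ε = m by ring] at h
    rw [← h]
    refine intervalIntegral.integral_congr fun y hy => ?_
    rw [Set.uIcc_of_le (by linarith)] at hy
    have : overlap ε y = y + ε := by
      unfold overlap
      rw [min_eq_right (by linarith [hy.2]), max_eq_left (b := y - ε) (by linarith [hy.2]),
        max_eq_right (by linarith [hy.1])]
      ring
    simp only [this]
  have hM : ∫ y in (-ε + m)..(1 + ε - m), overlap ε y * Real.log (overlap ε y) =
      (1 + 2 * ε - 2 * m) * (m * Real.log m) := by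
    have : ∫ y in (-ε + m)..(1 + ε - m), overlap ε y * Real.log (overlap ε y) =
        ∫ y in (-ε + m)..(1 + ε - m), m * Real.log m := by
      refine intervalIntegral.integral_congr fun y hy => ?_
      rw [Set.uIcc_of_le (by linarith)] at hy
      have : overlap ε y = m := by
        unfold overlap
        obtain ⟨h1, h2⟩ := hy
        rcases hmc with h | h
        · rw [min_eq_left (by linarith), max_eq_left (b := y - ε) (by linarith), h]
          norm_num
        · rw [min_eq_right (by linarith), max_eq_right (b := y - ε) (by linarith),
            max_eq_right (by linarith), h]
          ring
      simp only [this]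
    rw [this, intervalIntegral.integral_const, smul_eq_mul]
    ring
  have hR : ∫ y in (1 + ε - m)..(1 + ε), overlap ε y * Real.log (overlap ε y) =
      ∫ t in (0 : ℝ)..m, t * Real.log t := by
    have h := intervalIntegral.integral_comp_sub_left (a := 1 + ε - m) (b := 1 + ε)
      (fun t => t * Real.log t) (1 + ε)
    rw [sub_self, sub_sub_cancel] at h
    rw [← h]
    refine intervalIntegral.integral_congr fun y hy => ?_
    rw [Set.uIcc_of_le (by linarith)] at hy
    have : overlap ε y = 1 + ε - y := by
      unfold overlap
      rw [min_eq_left (by linarith [hy.1]), max_eq_right (b := y - ε) (by linarith [hy.1]),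
        max_eq_right (by linarith [hy.2])]
      ring
    simp only [this]
  rw [hsupp, ← intervalIntegral.integral_add_adjacent_intervals (hii _ (-ε + m)) (hii _ _),
    ← intervalIntegral.integral_add_adjacent_intervals (hii (-ε + m) (1 + ε - m)) (hii _ _),
    hL, hM, hR, integral_mul_log hm0]
  ring

/-- Let `ε > 0`, let `X ∼ U[0, 1]` and `Z ∼ U[−ε, ε]` be independent
uniform random variables, and let `Y = X + Z`.  Then the mutual information is

`I(X; Y) = ε − log (2ε)` if `ε < 1/2`, and `I(X; Y) = 1/(4ε)` if `ε ≥ 1/2`.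

Here `pX` and `pZ` are the densities of `X` and `Z`; by independence the pair `(X, Y)`
has joint density `(x, y) ↦ pX x * pZ (y − x)`, `Y` has density
`pY y = ∫ pX x * pZ (y − x) dx` (the convolution `pX * pZ`), and the mutual information
is `I(X; Y) = E[log (p_{X,Y}(X,Y) / (pX X * pY Y))]`. -/
theorem smoothed_uniform_mutual_information
    (ε : ℝ) (hε : 0 < ε)
    (pX pZ pY : ℝ → ℝ)
    (hpX : ∀ x, pX x = if x ∈ Set.Icc (0 : ℝ) 1 then 1 else 0)
    (hpZ : ∀ z, pZ z = if z ∈ Set.Icc (-ε) ε then 1 / (2 * ε) else 0)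
    (hpY : ∀ y, pY y = ∫ x, pX x * pZ (y - x)) :
    (∫ z : ℝ × ℝ, (pX z.1 * pZ (z.2 - z.1)) *
        Real.log ((pX z.1 * pZ (z.2 - z.1)) / (pX z.1 * pY z.2)))
      = if ε < 1 / 2 then ε - Real.log (2 * ε) else (4 * ε)⁻¹ := by
  have hjoint : ∀ x y, pX x * pZ (y - x) =
      (jointSupport ε).indicator (fun _ => (2 * ε)⁻¹) (x, y) := by
    intro x y
    classical
    rw [hpX, hpZ, Set.indicator_apply]
    by_cases h1 : x ∈ Set.Icc (0 : ℝ) 1 <;> by_cases h2 : y - x ∈ Set.Icc (-ε) ε <;>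
      simp only [jointSupport, Set.mem_ofPred_eq, h1, h2, if_true, if_false, and_true, and_false,
        one_div, one_mul, zero_mul, mul_zero]
  have hY : ∀ y, pY y = overlap ε y * (2 * ε)⁻¹ := by
    intro y
    rw [hpY, ← integral_section]
    simp only [hjoint]
  -- At an endpoint of the support of `pY` the overlap vanishes, and both sides are zero
  -- because `a / 0 = 0` and `log 0 = 0`.
  have hker : ∀ z : ℝ × ℝ, (pX z.1 * pZ (z.2 - z.1)) *
        Real.log ((pX z.1 * pZ (z.2 - z.1)) / (pX z.1 * pY z.2)) =
      (-(2 * ε)⁻¹) * (jointSupport ε).indicator (fun _ => Real.log (overlap ε z.2)) z := by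
    rintro ⟨x, y⟩
    simp only [hjoint]
    by_cases h : (x, y) ∈ jointSupport ε
    · have hx : pX x = 1 := by rw [hpX, if_pos h.1]
      have hdiv : (2 * ε)⁻¹ / (1 * (overlap ε y * (2 * ε)⁻¹)) = (overlap ε y)⁻¹ := by
        rw [one_mul, div_mul_cancel_right₀ (by positivity)]
      rw [Set.indicator_of_mem h, Set.indicator_of_mem h, hx, hY, hdiv, Real.log_inv]
      ring
    · rw [Set.indicator_of_notMem h, Set.indicator_of_notMem h]
      simp
  simp only [hker]
  rw [integral_const_mul, integral_kernel, integral_overlap hε rfl]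
  split_ifs with h
  · rw [min_eq_right (by linarith)]
    field_simp
    ring
  · rw [min_eq_left (by linarith), Real.log_one]
    field_simp
    ring
end
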